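/- Let f be a generalized sparse additive model whose components are three times continuously differentiable, with all third-order partial derivatives of every univariate component bounded in absolute value by B₃ on [-(1+r),(1+r)] and of every bivariate component by B₃ on [-(1+r),(1+r)]², for some r > 0, B₃ ≥ 0. Let m ≥ 1 and v ∈ ℝ^d with |v_i| ≤ 1/√m for all i, and let ζ ∈ [-(1+r),(1+r)]^d. Writing Q_q(ζ,v) = Σ_{i,j=1}^d v_i v_j ∂_i∂_j∂_q f(ζ), the following bounds hold: (i) if q ∈ S₁ then |Q_q(ζ,v)| ≤ B₃/m; (ii) if q ∈ var(S₂) with deg(q) = 1 then |Q_q(ζ,v)| ≤ 4B₃/m; (iii) if q ∈ var(S₂) with deg(q) > 1 then |Q_q(ζ,v)| ≤ (4ρ_m + 1)B₃/m. -/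

import Mathlib

/-!
Write `Q_q(g) = Σ_{i,j} v_i v_j ∂_i∂_j∂_q g(ζ)` (`quadThird`). On `C³` functions `Q_q` is additive
(`quadThird_add`, `quadThird_sum`), so `Q_q(f)` splits into the contributions of the components of
`f`. The third partials of a component depending on the coordinates in `s` vanish unless `q`, `i`
and `j` all lie in `s`, and `|v_i v_j| ≤ 1/m`, so such a component contributes at most
`|s|² B₃ / m`, and nothing at all if `q ∉ s`. Hence a univariate component costs `B₃/m`, a bivariate
one `4B₃/m`, and altogether
`|Q_q(f)| ≤ ([q ∈ S₁] + 4 deg q + [q ∈ var S₂, deg q > 1]) B₃ / m`,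
which specializes to the three bounds.
-/

open Finset

/-- Partial derivative of `g : ℝ^d → ℝ` with respect to coordinate `i`, at `x`. -/
noncomputable def pdv {d : ℕ} (i : Fin d) (g : (Fin d → ℝ) → ℝ) (x : Fin d → ℝ) : ℝ :=
  deriv (fun t => g (Function.update x i t)) (x i)

/-- The set of variables appearing in some pair of `S₂`. -/
def varsS {d : ℕ} (S₂ : Finset (Fin d × Fin d)) : Finset (Fin d) :=
  S₂.image Prod.fst ∪ S₂.image Prod.snd

/-- The degree of a variable `l`: the number of pairs of `S₂` containing `l`. -/
def degS {d : ℕ} (S₂ : Finset (Fin d × Fin d)) (l : Fin d) : ℕ :=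
  (S₂.filter (fun e => e.1 = l ∨ e.2 = l)).card

/-- Partial derivative of a bivariate function with respect to the first
(`false`) or second (`true`) argument. -/
noncomputable def bpd : Bool → (ℝ → ℝ → ℝ) → (ℝ → ℝ → ℝ)
  | false, φ => fun a b => deriv (fun s => φ s b) a
  | true, φ => fun a b => deriv (fun t => φ a t) b

/-! ### Partial derivatives of smooth functions -/

lemma pdv_eq_fderiv {d : ℕ} (i : Fin d) {g : (Fin d → ℝ) → ℝ} (hg : Differentiable ℝ g)
    (x : Fin d → ℝ) : pdv i g x = fderiv ℝ g x (Pi.single i 1) := by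
  have h1 : HasDerivAt (Function.update x i) (Pi.single i (1 : ℝ)) (x i) :=
    hasDerivAt_update x i (x i)
  have h2 : HasFDerivAt g (fderiv ℝ g x) (Function.update x i (x i)) := by
    rw [Function.update_eq_self]
    exact (hg x).hasFDerivAt
  exact (h2.comp_hasDerivAt (x i) h1).deriv

lemma contDiff_pdv {d : ℕ} (i : Fin d) {g : (Fin d → ℝ) → ℝ} (n : ℕ)
    (hg : ContDiff ℝ (n + 1 : ℕ) g) : ContDiff ℝ n (pdv i g) := by
  have hd : Differentiable ℝ g := hg.differentiable (by norm_cast)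
  have h : pdv i g = fun x => fderiv ℝ g x (Pi.single i 1) := funext (pdv_eq_fderiv i hd)
  rw [h]
  exact (hg.fderiv_right (by norm_cast)).clm_apply contDiff_const

lemma pdv_add {d : ℕ} (i : Fin d) {g h : (Fin d → ℝ) → ℝ} (hg : Differentiable ℝ g)
    (hh : Differentiable ℝ h) :
    pdv i (fun x => g x + h x) = fun x => pdv i g x + pdv i h x := by
  funext x
  rw [pdv_eq_fderiv i (hg.fun_add hh), pdv_eq_fderiv i hg, pdv_eq_fderiv i hh,
    fderiv_fun_add (hg x) (hh x)]
  rfl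

lemma pdv_const {d : ℕ} (i : Fin d) (c : ℝ) :
    pdv i (fun _ : Fin d → ℝ => c) = fun _ => 0 := by
  funext x
  simp [pdv]

lemma pdv_pdv_pdv_add {d : ℕ} (i j q : Fin d) {g h : (Fin d → ℝ) → ℝ} (hg : ContDiff ℝ 3 g)
    (hh : ContDiff ℝ 3 h) (x : Fin d → ℝ) :
    pdv i (pdv j (pdv q (fun x => g x + h x))) x
      = pdv i (pdv j (pdv q g)) x + pdv i (pdv j (pdv q h)) x := by
  have g1 := contDiff_pdv q 2 hg
  have h1 := contDiff_pdv q 2 hh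
  have g2 := contDiff_pdv j 1 g1
  have h2 := contDiff_pdv j 1 h1
  rw [pdv_add q (hg.differentiable (by norm_num)) (hh.differentiable (by norm_num)),
    pdv_add j (g1.differentiable (by norm_num)) (h1.differentiable (by norm_num)),
    pdv_add i (g2.differentiable (by norm_num)) (h2.differentiable (by norm_num))]

/-! ### The quadratic form of third partials -/

/-- `Q_q(ζ, v) = Σ_{i,j} v_i v_j ∂_i∂_j∂_q g(ζ)`, as a function of `g`. -/
noncomputable def quadThird {d : ℕ} (v ζ : Fin d → ℝ) (q : Fin d) (g : (Fin d → ℝ) → ℝ) : ℝ :=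
  ∑ i : Fin d, ∑ j : Fin d, v i * v j * pdv i (pdv j (pdv q g)) ζ

lemma quadThird_add {d : ℕ} (v ζ : Fin d → ℝ) (q : Fin d) {g h : (Fin d → ℝ) → ℝ}
    (hg : ContDiff ℝ 3 g) (hh : ContDiff ℝ 3 h) :
    quadThird v ζ q (fun x => g x + h x) = quadThird v ζ q g + quadThird v ζ q h := by
  simp only [quadThird, pdv_pdv_pdv_add _ _ _ hg hh, mul_add, sum_add_distrib]

lemma quadThird_const {d : ℕ} (v ζ : Fin d → ℝ) (q : Fin d) (c : ℝ) :
    quadThird v ζ q (fun _ => c) = 0 := by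
  simp [quadThird, pdv_const]

lemma quadThird_sum {d : ℕ} {ι : Type*} (v ζ : Fin d → ℝ) (q : Fin d) (s : Finset ι)
    (g : ι → (Fin d → ℝ) → ℝ) (hg : ∀ a, ContDiff ℝ 3 (g a)) :
    quadThird v ζ q (fun x => ∑ a ∈ s, g a x) = ∑ a ∈ s, quadThird v ζ q (g a) := by
  classical
  induction s using Finset.induction_on with
  | empty => simpa using quadThird_const v ζ q 0
  | insert a s ha ih =>
    simp only [sum_insert ha]
    rw [quadThird_add v ζ q (hg a) (ContDiff.sum fun b _ => hg b), ih]

/-- If the third partials of `g` are bounded by `B` and supported on index pairs in `s × s`, only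
`|s|²` terms of the quadratic form survive, each at most `B / m`. -/
lemma abs_quadThird_le {d : ℕ} {v ζ : Fin d → ℝ} {q : Fin d} {g : (Fin d → ℝ) → ℝ} {B : ℝ} {m : ℕ}
    (hv : ∀ i : Fin d, |v i| ≤ 1 / Real.sqrt m) (s : Finset (Fin d))
    (hg : ∀ i j, |pdv i (pdv j (pdv q g)) ζ| ≤ if i ∈ s then (if j ∈ s then B else 0) else 0) :
    |quadThird v ζ q g| ≤ (#s : ℝ) ^ 2 * (B / m) := by
  have hvv : ∀ i j, |v i * v j| ≤ 1 / m := fun i j => by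
    rw [abs_mul]
    calc |v i| * |v j| ≤ (1 / Real.sqrt m) * (1 / Real.sqrt m) :=
          mul_le_mul (hv i) (hv j) (abs_nonneg _) (by positivity)
      _ = 1 / m := by rw [div_mul_div_comm, Real.mul_self_sqrt (Nat.cast_nonneg m), one_mul]
  calc |quadThird v ζ q g|
      ≤ ∑ i : Fin d, ∑ j : Fin d, |v i * v j * pdv i (pdv j (pdv q g)) ζ| :=
        (abs_sum_le_sum_abs _ _).trans (sum_le_sum fun i _ => abs_sum_le_sum_abs _ _)
    _ ≤ ∑ i : Fin d, ∑ j : Fin d,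
          1 / (m : ℝ) * (if i ∈ s then (if j ∈ s then B else 0) else 0) := by
        refine sum_le_sum fun i _ => sum_le_sum fun j _ => ?_
        rw [abs_mul]
        exact mul_le_mul (hvv i j) (hg i j) (abs_nonneg _) (by positivity)
    _ = (#s : ℝ) ^ 2 * (B / m) := by
        simp only [← mul_sum, ← ite_sum_zero, sum_ite_mem, univ_inter, sum_const, nsmul_eq_mul]
        ring

/-! ### Components -/

lemma pdv_univariate {d : ℕ} (i p : Fin d) (h : ℝ → ℝ) :
    pdv i (fun x => h (x p)) = if i = p then (fun x => deriv h (x p)) else fun _ => 0 := by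
  funext x
  by_cases hip : i = p
  · subst hip
    simp [pdv]
  · simp [pdv, hip, Function.update_of_ne (Ne.symm hip)]

lemma pdv_bivariate {d : ℕ} (i a b : Fin d) (hab : a ≠ b) (φ : ℝ → ℝ → ℝ) :
    pdv i (fun x => φ (x a) (x b)) =
      if i = a then (fun x => bpd false φ (x a) (x b))
      else if i = b then (fun x => bpd true φ (x a) (x b)) else fun _ => 0 := by
  funext x
  by_cases hia : i = a
  · subst hia
    simp [pdv, bpd, Function.update_of_ne hab.symm]
  · by_cases hib : i = b
    · subst hib
      simp [pdv, bpd, hia, Function.update_of_ne hab]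
    · simp [pdv, hia, hib, Function.update_of_ne (Ne.symm hia), Function.update_of_ne (Ne.symm hib)]

lemma abs_quadThird_univariate_le {d : ℕ} {v ζ : Fin d → ℝ} {B : ℝ} {m : ℕ}
    (hv : ∀ i : Fin d, |v i| ≤ 1 / Real.sqrt m) (q p : Fin d) (h : ℝ → ℝ)
    (hB : |iteratedDeriv 3 h (ζ p)| ≤ B) :
    |quadThird v ζ q (fun x => h (x p))| ≤ if q = p then B / m else 0 := by
  by_cases hqp : q = p
  · have key := abs_quadThird_le (q := q) (ζ := ζ) (B := B) (g := fun x => h (x p)) hv {p} (by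
      intro i j
      simp only [iteratedDeriv_succ, iteratedDeriv_zero] at hB
      rw [pdv_univariate, if_pos hqp, pdv_univariate]
      by_cases hj : j = p
      · rw [if_pos hj, pdv_univariate]
        by_cases hi : i = p
        · simpa [hi, hj] using hB
        · simp [hi]
      · simp [hj, pdv_const])
    simpa [hqp] using key
  · simp [quadThird, pdv_univariate, hqp, pdv_const]

lemma abs_quadThird_bivariate_le {d : ℕ} {v ζ : Fin d → ℝ} {B : ℝ} {m : ℕ}
    (hv : ∀ i : Fin d, |v i| ≤ 1 / Real.sqrt m) (q a b : Fin d) (hab : a ≠ b) (φ : ℝ → ℝ → ℝ)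
    (hB : ∀ u₁ u₂ u₃ : Bool, |bpd u₁ (bpd u₂ (bpd u₃ φ)) (ζ a) (ζ b)| ≤ B) :
    |quadThird v ζ q (fun x => φ (x a) (x b))| ≤ if a = q ∨ b = q then 4 * (B / m) else 0 := by
  -- `∂_q` is again a bivariate component when `q ∈ {a, b}`.
  have main : ∀ u₃ : Bool, pdv q (fun x => φ (x a) (x b)) = (fun x => bpd u₃ φ (x a) (x b)) →
      |quadThird v ζ q (fun x => φ (x a) (x b))| ≤ 4 * (B / m) := by
    intro u₃ hu
    have key := abs_quadThird_le (q := q) (ζ := ζ) (B := B) (g := fun x => φ (x a) (x b)) hv {a, b}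
      (by
        have second : ∀ i u₂, |pdv i (fun x => bpd u₂ (bpd u₃ φ) (x a) (x b)) ζ|
            ≤ if i ∈ ({a, b} : Finset (Fin d)) then B else 0 := by
          intro i u₂
          rw [pdv_bivariate _ _ _ hab]
          by_cases hia : i = a
          · simpa [hia] using hB false u₂ u₃
          · by_cases hib : i = b
            · simpa [hib, hab.symm] using hB true u₂ u₃
            · simp [hia, hib]
        intro i j
        rw [hu, pdv_bivariate j _ _ hab]
        by_cases hja : j = a
        · simpa [hja] using second i false
        · by_cases hjb : j = b
          · simpa [hjb, hab.symm] using second i true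
          · simp [hja, hjb, pdv_const])
    rw [card_pair hab] at key
    norm_num at key
    exact key
  have hp := pdv_bivariate q a b hab φ
  by_cases hqa : q = a
  · rw [if_pos hqa] at hp
    rw [if_pos (Or.inl hqa.symm)]
    exact main _ hp
  · by_cases hqb : q = b
    · rw [if_neg hqa, if_pos hqb] at hp
      rw [if_pos (Or.inr hqb.symm)]
      exact main _ hp
    · rw [if_neg hqa, if_neg hqb] at hp
      simp [quadThird, hp, pdv_const, Ne.symm hqa, Ne.symm hqb]

/-! ### The bounds -/

/-- bounds on `Q_q(ζ,v) = Σ_{i,j} v_i v_j ∂_i∂_j∂_q f(ζ)` for a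
generalized sparse additive model with C³ components whose third-order partials
are bounded by `B₃`, depending on the type of the variable `q`. -/
theorem stmt5 {d : ℕ} (hd : 2 ≤ d)
    (S₁ : Finset (Fin d)) (S₂ : Finset (Fin d × Fin d))
    (hS₂ : ∀ e ∈ S₂, e.1 < e.2)
    (hdisj : Disjoint S₁ (varsS S₂))
    (ρ : ℕ) (hρ : ρ = (varsS S₂).sup (degS S₂))
    (c r B₃ : ℝ) (hr : 0 < r) (hB₃ : 0 ≤ B₃)
    (φ₁ : Fin d → ℝ → ℝ) (φ₂ : Fin d × Fin d → ℝ → ℝ → ℝ) (ψ : Fin d → ℝ → ℝ)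
    (hφ₁ : ∀ p, ContDiff ℝ 3 (φ₁ p))
    (hφ₂ : ∀ e, ContDiff ℝ 3 (fun z : ℝ × ℝ => φ₂ e z.1 z.2))
    (hψ : ∀ q, ContDiff ℝ 3 (ψ q))
    (hBφ₁ : ∀ p ∈ S₁, ∀ t ∈ Set.Icc (-(1+r)) (1+r), |iteratedDeriv 3 (φ₁ p) t| ≤ B₃)
    (hBψ : ∀ q ∈ (varsS S₂).filter (fun q => 1 < degS S₂ q),
      ∀ t ∈ Set.Icc (-(1+r)) (1+r), |iteratedDeriv 3 (ψ q) t| ≤ B₃)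
    (hBφ₂ : ∀ e ∈ S₂, ∀ u₁ u₂ u₃ : Bool, ∀ a ∈ Set.Icc (-(1+r)) (1+r),
      ∀ b ∈ Set.Icc (-(1+r)) (1+r), |bpd u₁ (bpd u₂ (bpd u₃ (φ₂ e))) a b| ≤ B₃)
    (f : (Fin d → ℝ) → ℝ)
    (hf : ∀ x, f x = c + (∑ p ∈ S₁, φ₁ p (x p)) + (∑ e ∈ S₂, φ₂ e (x e.1) (x e.2))
        + ∑ q ∈ (varsS S₂).filter (fun q => 1 < degS S₂ q), ψ q (x q))
    (m : ℕ) (hm : 1 ≤ m)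
    (v : Fin d → ℝ) (hv : ∀ i : Fin d, |v i| ≤ 1 / Real.sqrt m)
    (ζ : Fin d → ℝ) (hζ : ∀ i, ζ i ∈ Set.Icc (-(1+r)) (1+r)) :
    ∀ q : Fin d,
      (q ∈ S₁ →
        |∑ i : Fin d, ∑ j : Fin d, v i * v j * pdv i (pdv j (pdv q f)) ζ|
          ≤ B₃ / (m : ℝ)) ∧
      (q ∈ varsS S₂ → degS S₂ q = 1 →
        |∑ i : Fin d, ∑ j : Fin d, v i * v j * pdv i (pdv j (pdv q f)) ζ|
          ≤ 4 * B₃ / (m : ℝ)) ∧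
      (q ∈ varsS S₂ → 1 < degS S₂ q →
        |∑ i : Fin d, ∑ j : Fin d, v i * v j * pdv i (pdv j (pdv q f)) ζ|
          ≤ (4 * (ρ : ℝ) + 1) * B₃ / (m : ℝ)) := by
  intro q
  set T := (varsS S₂).filter (fun q => 1 < degS S₂ q) with hT
  have c1 : ∀ p, ContDiff ℝ 3 (fun x : Fin d → ℝ => φ₁ p (x p)) :=
    fun p => (hφ₁ p).comp (contDiff_apply ℝ ℝ p)
  have c2 : ∀ e : Fin d × Fin d, ContDiff ℝ 3 (fun x : Fin d → ℝ => φ₂ e (x e.1) (x e.2)) :=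
    fun e => (hφ₂ e).comp ((contDiff_apply ℝ ℝ e.1).prodMk (contDiff_apply ℝ ℝ e.2))
  have c3 : ∀ p, ContDiff ℝ 3 (fun x : Fin d → ℝ => ψ p (x p)) :=
    fun p => (hψ p).comp (contDiff_apply ℝ ℝ p)
  have s1 : ContDiff ℝ 3 (fun x : Fin d → ℝ => ∑ p ∈ S₁, φ₁ p (x p)) :=
    ContDiff.sum fun p _ => c1 p
  have s2 : ContDiff ℝ 3 (fun x : Fin d → ℝ => ∑ e ∈ S₂, φ₂ e (x e.1) (x e.2)) :=
    ContDiff.sum fun e _ => c2 e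
  have s3 : ContDiff ℝ 3 (fun x : Fin d → ℝ => ∑ p ∈ T, ψ p (x p)) :=
    ContDiff.sum fun p _ => c3 p
  have hQ : quadThird v ζ q f = (∑ p ∈ S₁, quadThird v ζ q (fun x => φ₁ p (x p)))
      + (∑ e ∈ S₂, quadThird v ζ q (fun x => φ₂ e (x e.1) (x e.2)))
      + ∑ p ∈ T, quadThird v ζ q (fun x => ψ p (x p)) := by
    rw [show f = _ from funext hf,
      quadThird_add v ζ q ((contDiff_const.add s1).add s2) s3,
      quadThird_add v ζ q (contDiff_const.add s1) s2, quadThird_add v ζ q contDiff_const s1,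
      quadThird_const, zero_add, quadThird_sum v ζ q S₁ _ c1, quadThird_sum v ζ q S₂ _ c2,
      quadThird_sum v ζ q T _ c3]
  have b1 : |∑ p ∈ S₁, quadThird v ζ q (fun x => φ₁ p (x p))|
      ≤ if q ∈ S₁ then B₃ / m else 0 := by
    refine (abs_sum_le_sum_abs _ _).trans ((sum_le_sum fun p hp =>
      abs_quadThird_univariate_le hv q p (φ₁ p) (hBφ₁ p hp _ (hζ p))).trans_eq ?_)
    simp
  have b2 : |∑ e ∈ S₂, quadThird v ζ q (fun x => φ₂ e (x e.1) (x e.2))|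
      ≤ degS S₂ q * (4 * (B₃ / m)) := by
    refine (abs_sum_le_sum_abs _ _).trans ((sum_le_sum fun e he =>
      abs_quadThird_bivariate_le hv q e.1 e.2 (hS₂ e he).ne (φ₂ e)
        (fun u₁ u₂ u₃ => hBφ₂ e he u₁ u₂ u₃ _ (hζ _) _ (hζ _))).trans_eq ?_)
    rw [← sum_filter, sum_const, nsmul_eq_mul, degS]
  have b3 : |∑ p ∈ T, quadThird v ζ q (fun x => ψ p (x p))|
      ≤ if q ∈ T then B₃ / m else 0 := by
    refine (abs_sum_le_sum_abs _ _).trans ((sum_le_sum fun p hp =>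
      abs_quadThird_univariate_le hv q p (ψ p) (hBψ p hp _ (hζ p))).trans_eq ?_)
    simp
  have htot : |quadThird v ζ q f| ≤ (if q ∈ S₁ then B₃ / (m : ℝ) else 0)
      + degS S₂ q * (4 * (B₃ / m)) + if q ∈ T then B₃ / (m : ℝ) else 0 := by
    rw [hQ]
    exact (abs_add_three _ _ _).trans (add_le_add (add_le_add b1 b2) b3)
  have hBm : 0 ≤ B₃ / (m : ℝ) := by positivity
  change (_ → |quadThird v ζ q f| ≤ _) ∧ (_ → _ → |quadThird v ζ q f| ≤ _) ∧
    (_ → _ → |quadThird v ζ q f| ≤ _)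
  refine ⟨fun hq => ?_, fun hq hdeg => ?_, fun hq hdeg => ?_⟩
  · have hqv : q ∉ varsS S₂ := Finset.disjoint_left.mp hdisj hq
    have hd0 : degS S₂ q = 0 := by
      rw [degS, card_eq_zero, filter_eq_empty_iff]
      rintro e he (h | h)
      · exact hqv (mem_union_left _ (mem_image.mpr ⟨e, he, h⟩))
      · exact hqv (mem_union_right _ (mem_image.mpr ⟨e, he, h⟩))
    have hqT : q ∉ T := fun h => hqv (mem_filter.mp h).1
    simpa [hq, hqT, hd0] using htot
  · have hq1 : q ∉ S₁ := fun h => Finset.disjoint_left.mp hdisj h hq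
    have hqT : q ∉ T := fun h => by
      have := (mem_filter.mp h).2
      omega
    rw [if_neg hq1, if_neg hqT, hdeg] at htot
    refine htot.trans_eq ?_
    push_cast
    ring
  · have hq1 : q ∉ S₁ := fun h => Finset.disjoint_left.mp hdisj h hq
    have hqT : q ∈ T := mem_filter.mpr ⟨hq, hdeg⟩
    have hle : (degS S₂ q : ℝ) ≤ ρ := by
      rw [hρ]
      exact_mod_cast Finset.le_sup (f := degS S₂) hq
    rw [if_neg hq1, if_pos hqT] at htot
    calc |quadThird v ζ q f| ≤ 0 + degS S₂ q * (4 * (B₃ / m)) + B₃ / m := htot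
      _ ≤ 0 + ρ * (4 * (B₃ / m)) + B₃ / m := by gcongr
      _ = (4 * (ρ : ℝ) + 1) * B₃ / m := by ring
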